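/- arXiv:0804.0201 — 4 statements merged into one kernel-verified Lean document; each statement's English description precedes it below -/
import Mathlib

section
/- Let n ≥ 1 and let B ∈ GL(n, ℤ) act on ℤⁿ. Form the semidirect product group G = ℤⁿ ⋊_B ℤ, with operation (v, a)·(w, b) = (v + Bᵃ·w, a + b). If G contains a nilpotent subgroup of finite index, then every complex eigenvalue of B is a root of unity. -/
open Matrix

/-- The semidirect product `ℤⁿ ⋊_B ℤ` for `B ∈ GL(n, ℤ)`, with underlying set `ℤⁿ × ℤ`
and operation `(v, a)·(w, b) = (v + Bᵃ·w, a + b)`. -/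
def LatGrp (n : ℕ) (_B : Matrix.GeneralLinearGroup (Fin n) ℤ) : Type := (Fin n → ℤ) × ℤ

namespace LatGrp

variable {n : ℕ}

instance (n : ℕ) (B : Matrix.GeneralLinearGroup (Fin n) ℤ) : Group (LatGrp n B) where
  mul g h := (g.1 + ((B ^ g.2 : Matrix.GeneralLinearGroup (Fin n) ℤ) :
      Matrix (Fin n) (Fin n) ℤ).mulVec h.1, g.2 + h.2)
  one := ((0 : Fin n → ℤ), (0 : ℤ))
  inv g := (-((B ^ (-g.2) : Matrix.GeneralLinearGroup (Fin n) ℤ) :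
      Matrix (Fin n) (Fin n) ℤ).mulVec g.1, -g.2)
  mul_assoc a b c := by
    show ((a.1 + ((B ^ a.2 : Matrix.GeneralLinearGroup (Fin n) ℤ) :
            Matrix (Fin n) (Fin n) ℤ).mulVec b.1)
          + ((B ^ (a.2 + b.2) : Matrix.GeneralLinearGroup (Fin n) ℤ) :
            Matrix (Fin n) (Fin n) ℤ).mulVec c.1, (a.2 + b.2) + c.2)
        = (a.1 + ((B ^ a.2 : Matrix.GeneralLinearGroup (Fin n) ℤ) :
            Matrix (Fin n) (Fin n) ℤ).mulVec
            (b.1 + ((B ^ b.2 : Matrix.GeneralLinearGroup (Fin n) ℤ) :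
              Matrix (Fin n) (Fin n) ℤ).mulVec c.1), a.2 + (b.2 + c.2))
    rw [_root_.zpow_add, Units.val_mul, Matrix.mulVec_add, Matrix.mulVec_mulVec, add_assoc, add_assoc]
  one_mul a := by
    show ((0 : Fin n → ℤ) + ((B ^ (0:ℤ) : Matrix.GeneralLinearGroup (Fin n) ℤ) :
        Matrix (Fin n) (Fin n) ℤ).mulVec a.1, (0:ℤ) + a.2) = a
    simp
    rfl
  mul_one a := by
    show (a.1 + ((B ^ a.2 : Matrix.GeneralLinearGroup (Fin n) ℤ) :
        Matrix (Fin n) (Fin n) ℤ).mulVec 0, a.2 + 0) = a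
    simp
    rfl
  inv_mul_cancel a := by
    show (-((B ^ (-a.2) : Matrix.GeneralLinearGroup (Fin n) ℤ) :
          Matrix (Fin n) (Fin n) ℤ).mulVec a.1
        + ((B ^ (-a.2) : Matrix.GeneralLinearGroup (Fin n) ℤ) :
          Matrix (Fin n) (Fin n) ℤ).mulVec a.1, -a.2 + a.2)
        = ((0 : Fin n → ℤ), (0 : ℤ))
    simp

end LatGrp



/-- Constructor for elements of the group. -/
def LatGrp.mk {n : ℕ} (B : Matrix.GeneralLinearGroup (Fin n) ℤ) (v : Fin n → ℤ) (a : ℤ) :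
    LatGrp n B := (v, a)

theorem LatGrp.mk_mul {n : ℕ} (B : Matrix.GeneralLinearGroup (Fin n) ℤ) (v w : Fin n → ℤ)
    (a b : ℤ) : LatGrp.mk B v a * LatGrp.mk B w b =
      LatGrp.mk B (v + ((B ^ a : Matrix.GeneralLinearGroup (Fin n) ℤ) :
      Matrix (Fin n) (Fin n) ℤ).mulVec w) (a + b) := rfl

theorem LatGrp.mk_one {n : ℕ} (B : Matrix.GeneralLinearGroup (Fin n) ℤ) :
    (1 : LatGrp n B) = LatGrp.mk B 0 0 := rfl

theorem LatGrp.mk_inj {n : ℕ} (B : Matrix.GeneralLinearGroup (Fin n) ℤ) {v w : Fin n → ℤ}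
    {a b : ℤ} (h : LatGrp.mk B v a = LatGrp.mk B w b) : v = w := congrArg Prod.fst h

theorem LatGrp.mk_pow_t {n : ℕ} (B : Matrix.GeneralLinearGroup (Fin n) ℤ) (k : ℕ) :
    LatGrp.mk B 0 1 ^ k = LatGrp.mk B 0 k := by
  induction k with
  | zero => rfl
  | succ k ih => rw [pow_succ, ih, LatGrp.mk_mul]; simp

theorem LatGrp.mk_pow_v {n : ℕ} (B : Matrix.GeneralLinearGroup (Fin n) ℤ) (v : Fin n → ℤ) (k : ℕ) :
    LatGrp.mk B v 0 ^ k = LatGrp.mk B (k • v) 0 := by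
  induction k with
  | zero => rw [pow_zero, zero_smul]; rfl
  | succ k ih => rw [pow_succ, ih, LatGrp.mk_mul, succ_nsmul]; simp

theorem LatGrp.comm {n : ℕ} (B : Matrix.GeneralLinearGroup (Fin n) ℤ) (w : Fin n → ℤ) (m : ℕ) :
    LatGrp.mk B w 0 * LatGrp.mk B 0 m * (LatGrp.mk B w 0)⁻¹ * (LatGrp.mk B 0 m)⁻¹
      = LatGrp.mk B ((1 - (B : Matrix (Fin n) (Fin n) ℤ) ^ m).mulVec w) 0 := by
  rw [mul_inv_eq_iff_eq_mul, mul_inv_eq_iff_eq_mul]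
  simp only [LatGrp.mk_mul]
  simp [Matrix.sub_mulVec]

theorem stmt4 (n : ℕ) (hn : 1 ≤ n) (B : Matrix.GeneralLinearGroup (Fin n) ℤ)
    (h : ∃ H : Subgroup (LatGrp n B), Group.IsNilpotent H ∧ H.FiniteIndex) :
    ∀ z : ℂ, (((B : Matrix (Fin n) (Fin n) ℤ).map (Int.cast : ℤ → ℂ)).charpoly).IsRoot z →
      ∃ m : ℕ, 0 < m ∧ z ^ m = 1 := by
  obtain ⟨H, hnil, hfin⟩ := h
  obtain ⟨m, hm, -, hmH⟩ := Subgroup.exists_pow_mem_of_index_ne_zero hfin.index_ne_zero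
    (LatGrp.mk B 0 1)
  rw [LatGrp.mk_pow_t] at hmH
  set A : Matrix (Fin n) (Fin n) ℤ := (B : Matrix (Fin n) (Fin n) ℤ) with hA
  have key : ∀ w, LatGrp.mk B w 0 ∈ H → ∀ j : ℕ,
      LatGrp.mk B (((1 - A ^ m) ^ j).mulVec w) 0 ∈ H.lowerCentralSeries j := by
    intro w hw j
    induction j with
    | zero => simpa using hw
    | succ j ih =>
      have e := LatGrp.comm B (((1 - A ^ m) ^ j).mulVec w) m
      rw [← hA, Matrix.mulVec_mulVec, ← pow_succ'] at e
      rw [← e]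
      exact Subgroup.commutator_mem_commutator ih hmH
  obtain ⟨c, hc⟩ := (Subgroup.isNilpotent_iff_lowerCentralSeries H).mp hnil
  have hz : (1 - A ^ m) ^ c = 0 := by
    apply Matrix.mulVec_injective
    funext v
    obtain ⟨k, hk, -, hkH⟩ := Subgroup.exists_pow_mem_of_index_ne_zero hfin.index_ne_zero
      (LatGrp.mk B v 0)
    rw [LatGrp.mk_pow_v] at hkH
    have h2 := key _ hkH c
    rw [hc, Subgroup.mem_bot] at h2
    have h3 := LatGrp.mk_inj B (h2.trans (LatGrp.mk_one B))
    rw [Matrix.mulVec_smul] at h3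
    rw [Matrix.zero_mulVec]
    exact (smul_eq_zero.mp h3).resolve_left (by omega)
  intro z hroot
  refine ⟨m, hm, ?_⟩
  set C := A.map (Int.cast : ℤ → ℂ) with hC
  have hzC : (1 - C ^ m) ^ c = 0 := by
    have := congrArg (Int.castRingHom ℂ).mapMatrix hz
    rw [map_pow, map_sub, map_pow, map_one, map_zero] at this
    exact this
  have : Nonempty (Fin n) := ⟨⟨0, hn⟩⟩
  have hs : z ∈ spectrum ℂ C := Matrix.mem_spectrum_iff_isRoot_charpoly.mpr hroot
  have := spectrum.subset_polynomial_aeval C ((1 - Polynomial.X ^ m) ^ c : Polynomial ℂ) ⟨z, hs, rfl⟩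
  simp [hzC] at this
  exact (sub_eq_zero.mp this.1).symm
end

section
/- Let k ≥ 1 and let r ∈ ℂ be a root of the polynomial X^(2k) + 3·X^k + 1. Then |log |r|| < 1/k. Consequently, for n = 2k, every root r of this polynomial satisfies |log |r|| < 2/n. -/
/-- If `r ∈ ℂ` is a root of `X^(2k) + 3·X^k + 1` (with `k ≥ 1`), then `|log |r|| < 1/k`;
consequently, with `n = 2k`, every root satisfies `|log |r|| < 2/n`. -/
theorem stmt10 (k : ℕ) (hk : 1 ≤ k) (r : ℂ) (hr : r ^ (2 * k) + 3 * r ^ k + 1 = 0) :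
    |Real.log ‖r‖| < 1 / (k : ℝ) ∧
      ∀ n : ℕ, n = 2 * k → |Real.log ‖r‖| < 2 / (n : ℝ) := by
  have hk0 : (0 : ℝ) < k := by exact_mod_cast hk
  have h5 : Real.sqrt 5 ^ 2 = 5 := Real.sq_sqrt (by norm_num)
  have h5c : ((Real.sqrt 5 : ℝ) : ℂ) ^ 2 = 5 := by exact_mod_cast h5
  have hs0 : 0 ≤ Real.sqrt 5 := Real.sqrt_nonneg 5
  have hs1 : Real.sqrt 5 < 2.24 := by nlinarith
  have hs2 : 2.23 < Real.sqrt 5 := by nlinarith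
  have hfac : (r ^ k - (((-3 + Real.sqrt 5) / 2 : ℝ) : ℂ)) *
      (r ^ k - (((-3 - Real.sqrt 5) / 2 : ℝ) : ℂ)) = 0 := by
    push_cast
    have h2 : r ^ (2 * k) = (r ^ k) ^ 2 := by rw [mul_comm, pow_mul]
    rw [h2] at hr
    linear_combination hr - h5c / 4
  have hb : 0.38 ≤ ‖r‖ ^ k ∧ ‖r‖ ^ k < 2.7 := by
    rw [← norm_pow]
    rcases mul_eq_zero.mp hfac with h | h
    · rw [sub_eq_zero.mp h, Complex.norm_real, Real.norm_eq_abs, abs_of_neg (by linarith)]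
      constructor <;> linarith
    · rw [sub_eq_zero.mp h, Complex.norm_real, Real.norm_eq_abs, abs_of_neg (by linarith)]
      constructor <;> linarith
  have he := Real.exp_one_gt_d9
  have hlog : |Real.log (‖r‖ ^ k)| < 1 := by
    have hpos : 0 < ‖r‖ ^ k := by linarith [hb.1]
    rw [abs_lt]
    constructor
    · rw [Real.lt_log_iff_exp_lt hpos, Real.exp_neg]
      refine lt_of_lt_of_le ?_ hb.1
      rw [inv_lt_comm₀ (Real.exp_pos 1) (by norm_num)]
      refine lt_trans ?_ he
      norm_num
    · rw [Real.log_lt_iff_lt_exp hpos]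
      linarith [hb.2]
  have main : |Real.log ‖r‖| < 1 / (k : ℝ) := by
    rw [Real.log_pow, abs_mul, abs_of_pos hk0] at hlog
    rw [lt_div_iff₀ hk0]
    linarith
  refine ⟨main, ?_⟩
  rintro n rfl
  have : (2 : ℝ) / ((2 * k : ℕ) : ℝ) = 1 / k := by
    push_cast
    field_simp
  rw [this]
  exact main
end

section
/- For every k ≥ 1, the polynomial X^(2k) + 3·X^k + 1 (with rational coefficients) is squarefree; equivalently, it has 2k distinct roots in ℂ. -/
open Polynomial

lemma sep_aux (k : ℕ) (hk : 1 ≤ k) :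
    (X ^ (2 * k) + C 3 * X ^ k + 1 : ℚ[X]).Separable := by
  obtain ⟨m, rfl⟩ : ∃ m, k = m + 1 := ⟨k - 1, by omega⟩
  have hm : ((m : ℚ) + 1) ≠ 0 := by positivity
  have hd : X * derivative (X ^ (2 * (m + 1)) + C 3 * X ^ (m + 1) + 1 : ℚ[X])
      = C ((m : ℚ) + 1) * (2 * (X ^ (m + 1)) ^ 2 + 3 * X ^ (m + 1)) := by
    have h2 : 2 * (m + 1) - 1 = 2 * m + 1 := by omega
    simp only [derivative_add, derivative_X_pow, derivative_C_mul, derivative_one, h2,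
      Nat.add_sub_cancel]
    have h3 : (C 3 : ℚ[X]) = 3 := rfl
    simp only [h3, map_add, map_one, map_natCast, Nat.cast_mul, Nat.cast_add, map_mul,
      Nat.cast_one, Nat.cast_ofNat, map_ofNat]
    ring
  have hc : (C ((m : ℚ) + 1)⁻¹ * C ((m : ℚ) + 1) : ℚ[X]) = 1 := by
    rw [← C_mul, inv_mul_cancel₀ hm, C_1]
  have h5 : (C (1 / 5) : ℚ[X]) * 5 = 1 := by
    have : (5 : ℚ[X]) = C 5 := rfl
    rw [this, ← C_mul]; norm_num
  have h3 : (C 3 : ℚ[X]) = 3 := rfl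
  refine ⟨C (1 / 5) * (6 * X ^ (m + 1) + 5),
    C (1 / 5) * C ((m : ℚ) + 1)⁻¹ * (-3 * X ^ (m + 1) - 7) * X, ?_⟩
  rw [mul_assoc _ X, hd, h3, pow_mul' X 2 (m + 1)]
  generalize (X ^ (m + 1) : ℚ[X]) = Y at *
  linear_combination (C (1 / 5)) * (-3 * Y - 7) * (2 * Y ^ 2 + 3 * Y) * hc + h5

/-- For every `k ≥ 1`, the polynomial `X^(2k) + 3·X^k + 1 ∈ ℚ[X]` is squarefree;
equivalently, it has `2k` distinct roots in `ℂ`. -/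
theorem stmt11 (k : ℕ) (hk : 1 ≤ k) :
    Squarefree (X ^ (2 * k) + C 3 * X ^ k + 1 : ℚ[X]) ∧
      ((X ^ (2 * k) + C 3 * X ^ k + 1 : ℚ[X]).map
          (algebraMap ℚ ℂ)).roots.toFinset.card = 2 * k := by
  have hs := sep_aux k hk
  refine ⟨hs.squarefree, ?_⟩
  have hdeg : (X ^ (2 * k) + C 3 * X ^ k + 1 : ℚ[X]).natDegree = 2 * k := by
    have h : (X ^ (2 * k) + C 3 * X ^ k + 1 : ℚ[X])
      = X ^ (2 * k) + (C 3 * X ^ k + C 1) := by rw [C_1]; ring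
    rw [h, natDegree_add_eq_left_of_natDegree_lt, natDegree_X_pow]
    rw [natDegree_X_pow, natDegree_add_C]
    exact lt_of_le_of_lt (natDegree_C_mul_X_pow_le _ _) (by omega)
  have hs' := hs.map (f := algebraMap ℚ ℂ)
  rw [Multiset.toFinset_card_of_nodup (nodup_roots hs'),
    ← (IsAlgClosed.splits _).natDegree_eq_card_roots, natDegree_map, hdeg]
end

section
/- For every k ≥ 1 and n = 2k, there exists a matrix B ∈ GL(n, ℤ) such that every complex eigenvalue r of B satisfies |log |r|| < 2/n and at least one eigenvalue of B has absolute value different from 1; consequently, the semidirect product group ℤⁿ ⋊_B ℤ (with operation (v, a)·(w, b) = (v + Bᵃ·w, a + b)) contains no nilpotent subgroup of finite index. -/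
open Matrix

open Polynomial in
lemma exists_mat (k : ℕ) (hk : 1 ≤ k) (n : ℕ) (hn : n = 2 * k) :
    ∃ M : Matrix (Fin n) (Fin n) ℤ, M ^ n = M ^ k + 1 := by
  have hdeg : (X ^ k + 1 : ℤ[X]).degree < (n : ℕ) := by
    have : (X ^ k + 1 : ℤ[X]) = X ^ k + C 1 := by simp
    rw [this, degree_X_pow_add_C (by omega)]
    exact_mod_cast (by omega : k < n)
  have hmon : (X ^ n - (X ^ k + 1) : ℤ[X]).Monic := by
    rw [sub_eq_add_neg]
    exact monic_X_pow_add (by rwa [degree_neg])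
  have hnat : (X ^ n - (X ^ k + 1) : ℤ[X]).natDegree = n := by
    apply natDegree_eq_of_degree_eq_some
    rw [degree_sub_eq_left_of_degree_lt] <;> simp [degree_X_pow]
    simpa using hdeg
  set f : ℤ[X] := X ^ n - (X ^ k + 1) with hf
  have hd : (AdjoinRoot.powerBasis' hmon).dim = n := by
    simp [hnat]
  let b := (AdjoinRoot.powerBasis' hmon).basis.reindex (finCongr hd)
  refine ⟨Algebra.leftMulMatrix b (AdjoinRoot.root f), ?_⟩
  rw [← map_pow, ← map_pow, ← map_one (Algebra.leftMulMatrix b), ← map_add]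
  congr 1
  have := AdjoinRoot.aeval_eq (f := f) f
  rw [AdjoinRoot.mk_self] at this
  rw [hf] at this
  simp only [map_sub, map_add, map_pow, aeval_X, map_one] at this
  exact sub_eq_zero.mp this

lemma norm_facts (k : ℕ) (hk : 1 ≤ k) (n : ℕ) (hn : n = 2 * k) (r : ℂ)
    (h : r ^ n = r ^ k + 1) : |Real.log ‖r‖| < 2 / (n : ℝ) ∧ ‖r‖ ≠ 1 := by
  have h1 : (r ^ k - (Real.goldenRatio : ℂ)) * (r ^ k - (Real.goldenConj : ℂ)) = 0 := by
    have e1 : ((Real.goldenRatio : ℂ)) + (Real.goldenConj : ℂ) = 1 := by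
      exact_mod_cast congrArg (fun x : ℝ => (x : ℂ)) Real.goldenRatio_add_goldenConj
    have e2 : ((Real.goldenRatio : ℂ)) * (Real.goldenConj : ℂ) = -1 := by
      exact_mod_cast congrArg (fun x : ℝ => (x : ℂ)) Real.goldenRatio_mul_goldenConj
    have h2 : r ^ k * r ^ k = r ^ k + 1 := by rw [← h, hn, two_mul, pow_add]
    linear_combination h2 - r ^ k * e1 + e2
  have hpos : 0 < Real.log Real.goldenRatio := Real.log_pos Real.one_lt_goldenRatio
  have hlt : Real.log Real.goldenRatio < 1 := by
    rw [Real.log_lt_iff_lt_exp Real.goldenRatio_pos]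
    have := Real.exp_one_gt_d9
    have := Real.goldenRatio_lt_two
    linarith
  have key : |Real.log (‖r‖ ^ k)| = Real.log Real.goldenRatio := by
    rw [← norm_pow]
    rcases mul_eq_zero.mp h1 with h | h
    · rw [sub_eq_zero.mp h, Complex.norm_real, Real.norm_eq_abs, Real.log_abs, abs_of_pos hpos]
    · rw [sub_eq_zero.mp h, Complex.norm_real, Real.norm_eq_abs, Real.log_abs,
        ← neg_neg Real.goldenConj, ← Real.inv_goldenRatio, Real.log_neg_eq_log, Real.log_inv,
        abs_neg, abs_of_pos hpos]
  have hk' : (0 : ℝ) < k := by exact_mod_cast hk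
  rw [Real.log_pow, abs_mul, abs_of_pos hk'] at key
  constructor
  · rw [hn]
    push_cast
    rw [lt_div_iff₀ (by positivity)]
    nlinarith
  · intro h
    rw [h] at key
    simp at key
    linarith

lemma root_poly {n : ℕ} (M : Matrix (Fin n) (Fin n) ℤ) (p : Polynomial ℤ)
    (hp : Polynomial.aeval M p = 0) (r : ℂ)
    (hr : (M.map (Int.cast : ℤ → ℂ)).charpoly.IsRoot r) : Polynomial.aeval r p = 0 := by
  let q : Polynomial ℂ := p.map (algebraMap ℤ ℂ)
  have hq : Polynomial.aeval (M.map (Int.cast : ℤ → ℂ)) q = 0 := by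
    have h1 : Polynomial.aeval ((Int.castRingHom ℂ).mapMatrix M) p = 0 := by
      have := congrArg ((Int.castRingHom ℂ).mapMatrix) hp
      rw [map_zero] at this
      rw [← this]
      exact Polynomial.aeval_algHom_apply ((Int.castRingHom ℂ).mapMatrix.toIntAlgHom) M p
    simp only [q, Polynomial.aeval_map_algebraMap]
    exact h1
  have hs : r ∈ spectrum ℂ (M.map (Int.cast : ℤ → ℂ)) :=
    Matrix.mem_spectrum_iff_isRoot_charpoly.mpr hr
  have h2 := spectrum.subset_polynomial_aeval (M.map (Int.cast : ℤ → ℂ)) q ⟨r, hs, rfl⟩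
  rw [hq] at h2
  have hnt : Nontrivial (Matrix (Fin n) (Fin n) ℂ) := by
    by_contra hc
    rw [not_nontrivial_iff_subsingleton] at hc
    rw [spectrum.of_subsingleton] at hs
    exact hs
  rw [spectrum.zero_eq, Set.mem_singleton_iff] at h2
  rw [← Polynomial.eval_map_algebraMap]
  exact h2

namespace LatGrp

def mk_s14 {n : ℕ} (B : Matrix.GeneralLinearGroup (Fin n) ℤ) (v : Fin n → ℤ) (a : ℤ) : LatGrp n B :=
  ((v, a) : (Fin n → ℤ) × ℤ)

lemma mk_mul_s14 {n : ℕ} (B : Matrix.GeneralLinearGroup (Fin n) ℤ) (v w : Fin n → ℤ) (a b : ℤ) :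
    mk_s14 B v a * mk_s14 B w b = mk_s14 B (v + ((B ^ a : Matrix.GeneralLinearGroup (Fin n) ℤ) :
      Matrix (Fin n) (Fin n) ℤ).mulVec w) (a + b) := rfl

lemma mk_inj_s14 {n : ℕ} {B : Matrix.GeneralLinearGroup (Fin n) ℤ} {v w : Fin n → ℤ} {a b : ℤ}
    (h : mk_s14 B v a = mk_s14 B w b) : v = w := congrArg Prod.fst h

lemma one_eq {n : ℕ} (B : Matrix.GeneralLinearGroup (Fin n) ℤ) : (1 : LatGrp n B) = mk_s14 B 0 0 := rfl

lemma mk_pow_vec {n : ℕ} (B : Matrix.GeneralLinearGroup (Fin n) ℤ) (v : Fin n → ℤ) (m : ℕ) :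
    mk_s14 B v 0 ^ m = mk_s14 B (m • v) 0 := by
  induction m with
  | zero => simp [one_eq]
  | succ m ih => rw [pow_succ, ih, mk_mul_s14]; simp [add_smul]

lemma mk_pow_int {n : ℕ} (B : Matrix.GeneralLinearGroup (Fin n) ℤ) (m : ℕ) :
    mk_s14 B 0 1 ^ m = mk_s14 B 0 m := by
  induction m with
  | zero => simp [one_eq]
  | succ m ih => rw [pow_succ, ih, mk_mul_s14]; simp

lemma comm_eq {n : ℕ} (B : Matrix.GeneralLinearGroup (Fin n) ℤ) (v : Fin n → ℤ) (m : ℕ) :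
    mk_s14 B v 0 * mk_s14 B 0 m * (mk_s14 B v 0)⁻¹ * (mk_s14 B 0 m)⁻¹ =
      mk_s14 B ((1 - (B : Matrix (Fin n) (Fin n) ℤ) ^ m).mulVec v) 0 := by
  rw [mul_inv_eq_iff_eq_mul, mul_inv_eq_iff_eq_mul, mk_mul_s14, mk_mul_s14, mk_mul_s14]
  simp [Matrix.sub_mulVec]

lemma ucs_vec {n : ℕ} (B : Matrix.GeneralLinearGroup (Fin n) ℤ) (H : Subgroup (LatGrp n B))
    (m : ℕ) (hm : mk_s14 B 0 m ∈ H) (j : ℕ) : ∀ (v : Fin n → ℤ) (hv : mk_s14 B v 0 ∈ H),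
      (⟨mk_s14 B v 0, hv⟩ : H) ∈ Subgroup.upperCentralSeries H j →
      ((1 - (B : Matrix (Fin n) (Fin n) ℤ) ^ m) ^ j).mulVec v = 0 := by
  induction j with
  | zero =>
    intro v hv h
    rw [Subgroup.upperCentralSeries_zero, Subgroup.mem_bot] at h
    have := mk_inj_s14 (congrArg Subtype.val h : mk_s14 B v 0 = mk_s14 B 0 0)
    simp [this]
  | succ j ih =>
    intro v hv h
    have h2 := (Subgroup.mem_upperCentralSeries_succ_iff.mp h) ⟨mk_s14 B 0 m, hm⟩
    have h3 := comm_eq B v m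
    rw [pow_succ, ← Matrix.mulVec_mulVec]
    have hmem : mk_s14 B ((1 - (B : Matrix (Fin n) (Fin n) ℤ) ^ m).mulVec v) 0 ∈ H := by
      rw [← h3]
      exact H.mul_mem (H.mul_mem (H.mul_mem hv hm) (H.inv_mem hv)) (H.inv_mem hm)
    apply ih _ hmem
    convert h2 using 1
    exact Subtype.ext h3.symm

lemma unip {n : ℕ} (B : Matrix.GeneralLinearGroup (Fin n) ℤ) (H : Subgroup (LatGrp n B))
    (hN : Group.IsNilpotent H) (hF : H.FiniteIndex) :
    ∃ m j : ℕ, 0 < m ∧ (1 - (B : Matrix (Fin n) (Fin n) ℤ) ^ m) ^ j = 0 := by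
  obtain ⟨m, hm0, -, hm⟩ := Subgroup.exists_pow_mem_of_index_ne_zero hF.index_ne_zero (mk_s14 B 0 1)
  rw [mk_pow_int] at hm
  obtain ⟨j, hj⟩ := hN.nilpotent
  refine ⟨m, j, hm0, ?_⟩
  apply Matrix.ext_of_mulVec_single
  intro i
  obtain ⟨N, hN0, -, hN⟩ :=
    Subgroup.exists_pow_mem_of_index_ne_zero hF.index_ne_zero (mk_s14 B (Pi.single i 1) 0)
  rw [mk_pow_vec] at hN
  have := ucs_vec B H m hm j _ hN (by rw [hj]; trivial)
  rw [Matrix.mulVec_smul] at this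
  rw [Matrix.zero_mulVec]
  exact (smul_eq_zero.mp this).resolve_left (by omega)

end LatGrp

/-- For every `n = 2k`, there exists `B ∈ GL(n, ℤ)` all of whose complex eigenvalues `r`
satisfy `|log |r|| < 2/n`, with at least one eigenvalue of absolute value different from `1`;
consequently the semidirect product `ℤⁿ ⋊_B ℤ` contains no nilpotent subgroup of finite
index. -/
theorem stmt14 (k : ℕ) (hk : 1 ≤ k) (n : ℕ) (hn : n = 2 * k) :
    ∃ B : Matrix.GeneralLinearGroup (Fin n) ℤ,
      (∀ r : ℂ, (((B : Matrix (Fin n) (Fin n) ℤ).map (Int.cast : ℤ → ℂ)).charpoly).IsRoot r →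
        |Real.log ‖r‖| < 2 / (n : ℝ)) ∧
      (∃ r : ℂ, (((B : Matrix (Fin n) (Fin n) ℤ).map (Int.cast : ℤ → ℂ)).charpoly).IsRoot r ∧
        ‖r‖ ≠ 1) ∧
      ¬ ∃ H : Subgroup (LatGrp n B), Group.IsNilpotent H ∧ H.FiniteIndex := by
  obtain ⟨M, hM⟩ := exists_mat k hk n hn
  have hinv : M * (M ^ (n - 1) - M ^ (k - 1)) = 1 := by
    rw [mul_sub, ← pow_succ', ← pow_succ', Nat.sub_add_cancel (by omega),
      Nat.sub_add_cancel hk, hM]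
    simp
  let B : Matrix.GeneralLinearGroup (Fin n) ℤ :=
    ⟨M, M ^ (n - 1) - M ^ (k - 1), hinv, mul_eq_one_comm.mp hinv⟩
  have hroot : ∀ r : ℂ, ((M.map (Int.cast : ℤ → ℂ)).charpoly).IsRoot r →
      |Real.log ‖r‖| < 2 / (n : ℝ) ∧ ‖r‖ ≠ 1 := by
    intro r hr
    apply norm_facts k hk n hn
    have := root_poly M (Polynomial.X ^ n - (Polynomial.X ^ k + 1)) (by simp [hM]) r hr
    simpa [sub_eq_zero] using this
  obtain ⟨r, hr⟩ : ∃ r : ℂ, ((M.map (Int.cast : ℤ → ℂ)).charpoly).IsRoot r := by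
    apply IsAlgClosed.exists_root
    rw [Matrix.charpoly_degree_eq_dim, Fintype.card_fin]
    exact_mod_cast (by omega : n ≠ 0)
  refine ⟨B, fun r hr => (hroot r hr).1, ⟨r, hr, (hroot r hr).2⟩, ?_⟩
  rintro ⟨H, hN, hF⟩
  obtain ⟨m, j, hm, h⟩ := LatGrp.unip B H hN hF
  change (1 - M ^ m) ^ j = 0 at h
  have := root_poly M ((1 - Polynomial.X ^ m) ^ j) (by simp [h]) r hr
  simp only [map_pow, map_sub, map_one, Polynomial.aeval_X] at this
  have h1 : r ^ m = 1 := (sub_eq_zero.mp (eq_zero_of_pow_eq_zero this)).symm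
  apply (hroot r hr).2
  exact Complex.norm_eq_one_of_pow_eq_one h1 hm.ne'
end
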